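/- arXiv:1402.6856 — 2 statements merged into one kernel-verified Lean document; each statement's English description precedes it below -/
import Mathlib

section
/- Let q_1, q_2, u_1, u_3 be smooth functions of x satisfying u_2 = −(1/2)u_{1x}, and define δu_1 = −2(q_1q_2)_x, δu_3 = 2(q_1q_2)_x u_1 − 2 q_1 q_2 u_{1x} − (q_1 q_{2xx} + q_2 q_{1xx})_x, and δu_4 = 4(q_1q_2)_x u_2 − 2 q_1 q_2 u_{2x} − 3(q_2 q_{1xx} + q_1 q_{2xx}) u_1 − 6 q_{1x} q_{2x} u_1 + 2(q_1 q_2 u_{1x})_x + (q_1 q_{2xxx} + q_2 q_{1xxx})_x. Then δu_4 = (1/4)(δu_1)_{xxx} − (3/2)(δu_3)_x, i.e. the ghost variations are consistent with the C-type constraint u_4 = (1/4)u_{1xxx} − (3/2)u_{3x}. -/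
/-- The derivative of a smooth function on `ℝ` is smooth. -/
theorem ContDiff.deriv_of_smooth {f : ℝ → ℝ} (hf : ContDiff ℝ (⊤ : ℕ∞) f) :
    ContDiff ℝ (⊤ : ℕ∞) (deriv f) :=
  (contDiff_infty_iff_deriv.1 hf).2

/-- A smooth function on `ℝ` has derivative `deriv f x` at every `x`. -/
theorem ContDiff.hasDerivAt_of_smooth {f : ℝ → ℝ} (hf : ContDiff ℝ (⊤ : ℕ∞) f) (x : ℝ) :
    HasDerivAt f (deriv f x) x :=
  (contDiff_infty_iff_deriv.1 hf).1.differentiableAt.hasDerivAt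

/-- Let `q₁, q₂, u₁` be smooth functions of `x`, let
`u₂ = −(1/2)u₁ₓ` (the C-type constraint), and define the ghost variations
`δu₁ = −2(q₁q₂)ₓ`,
`δu₃ = 2(q₁q₂)ₓ u₁ − 2 q₁q₂ u₁ₓ − (q₁ q₂ₓₓ + q₂ q₁ₓₓ)ₓ`, and
`δu₄ = 4(q₁q₂)ₓ u₂ − 2 q₁q₂ u₂ₓ − 3(q₂ q₁ₓₓ + q₁ q₂ₓₓ) u₁ − 6 q₁ₓ q₂ₓ u₁
        + 2(q₁ q₂ u₁ₓ)ₓ + (q₁ q₂ₓₓₓ + q₂ q₁ₓₓₓ)ₓ`.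
Then `δu₄ = (1/4)(δu₁)ₓₓₓ − (3/2)(δu₃)ₓ`: the ghost variations are consistent with
the C-type constraint `u₄ = (1/4)u₁ₓₓₓ − (3/2)u₃ₓ`. -/
theorem ghost_variation_u4_consistent
    (q₁ q₂ u₁ : ℝ → ℝ)
    (hq₁ : ContDiff ℝ (⊤ : ℕ∞) q₁) (hq₂ : ContDiff ℝ (⊤ : ℕ∞) q₂) (hu₁ : ContDiff ℝ (⊤ : ℕ∞) u₁)
    (u₂ : ℝ → ℝ) (hu₂ : u₂ = fun x => -(1/2) * deriv u₁ x)
    (δu₁ δu₃ δu₄ : ℝ → ℝ)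
    (hδu₁ : δu₁ = fun x => -2 * deriv (fun y => q₁ y * q₂ y) x)
    (hδu₃ : δu₃ = fun x =>
      2 * deriv (fun y => q₁ y * q₂ y) x * u₁ x - 2 * (q₁ x * q₂ x) * deriv u₁ x
        - deriv (fun y => q₁ y * deriv (deriv q₂) y + q₂ y * deriv (deriv q₁) y) x)
    (hδu₄ : δu₄ = fun x =>
      4 * deriv (fun y => q₁ y * q₂ y) x * u₂ x - 2 * (q₁ x * q₂ x) * deriv u₂ x
        - 3 * (q₂ x * deriv (deriv q₁) x + q₁ x * deriv (deriv q₂) x) * u₁ x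
        - 6 * (deriv q₁ x * deriv q₂ x) * u₁ x
        + 2 * deriv (fun y => q₁ y * q₂ y * deriv u₁ y) x
        + deriv (fun y => q₁ y * deriv (deriv (deriv q₂)) y
            + q₂ y * deriv (deriv (deriv q₁)) y) x) :
    δu₄ = fun x => (1/4) * deriv (deriv (deriv δu₁)) x - (3/2) * deriv δu₃ x := by
  have a₀ := hq₁.hasDerivAt_of_smooth
  have a₁ := hq₁.deriv_of_smooth.hasDerivAt_of_smooth
  have a₂ := hq₁.deriv_of_smooth.deriv_of_smooth.hasDerivAt_of_smooth
  have a₃ := hq₁.deriv_of_smooth.deriv_of_smooth.deriv_of_smooth.hasDerivAt_of_smooth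
  have b₀ := hq₂.hasDerivAt_of_smooth
  have b₁ := hq₂.deriv_of_smooth.hasDerivAt_of_smooth
  have b₂ := hq₂.deriv_of_smooth.deriv_of_smooth.hasDerivAt_of_smooth
  have b₃ := hq₂.deriv_of_smooth.deriv_of_smooth.deriv_of_smooth.hasDerivAt_of_smooth
  have c₀ := hu₁.hasDerivAt_of_smooth
  have c₁ := hu₁.deriv_of_smooth.hasDerivAt_of_smooth
  have product_deriv : deriv (fun y => q₁ y * q₂ y) =
      fun y => deriv q₁ y * q₂ y + q₁ y * deriv q₂ y :=
    deriv_eq fun x => (a₀ x).mul (b₀ x)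
  have symm_deriv : deriv (fun y => q₁ y * deriv (deriv q₂) y + q₂ y * deriv (deriv q₁) y) =
      fun y => deriv q₁ y * deriv (deriv q₂) y + q₁ y * deriv (deriv (deriv q₂)) y
        + (deriv q₂ y * deriv (deriv q₁) y + q₂ y * deriv (deriv (deriv q₁)) y) :=
    deriv_eq fun x => ((a₀ x).mul (b₂ x)).add ((b₀ x).mul (a₂ x))
  rw [product_deriv] at hδu₁ hδu₃ hδu₄
  rw [symm_deriv] at hδu₃
  have δu₁_deriv := (congrArg deriv hδu₁).trans (deriv_eq fun x =>
    (((a₁ x).mul (b₀ x)).add ((a₀ x).mul (b₁ x))).const_mul (-2))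
  have δu₁_deriv₂ := (congrArg deriv δu₁_deriv).trans (deriv_eq fun x =>
      ((((a₂ x).mul (b₀ x)).add ((a₁ x).mul (b₁ x))).add
        (((a₁ x).mul (b₁ x)).add ((a₀ x).mul (b₂ x)))).const_mul (-2))
  have δu₁_deriv₃ := (congrArg deriv δu₁_deriv₂).trans (deriv_eq fun x =>
      (((((a₃ x).mul (b₀ x)).add ((a₂ x).mul (b₁ x))).add
          (((a₂ x).mul (b₁ x)).add ((a₁ x).mul (b₂ x)))).add
        ((((a₂ x).mul (b₁ x)).add ((a₁ x).mul (b₂ x))).add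
          (((a₁ x).mul (b₂ x)).add ((a₀ x).mul (b₃ x))))).const_mul (-2))
  have δu₃_deriv := (congrArg deriv hδu₃).trans (deriv_eq fun x =>
      ((((((a₁ x).mul (b₀ x)).add ((a₀ x).mul (b₁ x))).const_mul 2).mul (c₀ x)).sub
        ((((a₀ x).mul (b₀ x)).const_mul 2).mul (c₁ x))).sub
        ((((a₁ x).mul (b₂ x)).add ((a₀ x).mul (b₃ x))).add
          (((b₁ x).mul (a₂ x)).add ((b₀ x).mul (a₃ x)))))
  have u₂_deriv := (congrArg deriv hu₂).trans (deriv_eq fun x => (c₁ x).const_mul (-(1/2)))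
  have flux_deriv : deriv (fun y => q₁ y * q₂ y * deriv u₁ y) = _ :=
    deriv_eq fun x => ((a₀ x).mul (b₀ x)).mul (c₁ x)
  have third_deriv : deriv (fun y => q₁ y * deriv (deriv (deriv q₂)) y
      + q₂ y * deriv (deriv (deriv q₁)) y) = _ :=
    deriv_eq fun x => ((a₀ x).mul (b₃ x)).add ((b₀ x).mul (a₃ x))
  rw [hδu₄, δu₁_deriv₃, δu₃_deriv, u₂_deriv, flux_deriv, third_deriv, hu₂]
  funext x
  simp only [Pi.mul_apply, Pi.add_apply]
  ring
end

section
/- Let q be a smooth function of (x, t_5) and set u_1 = 2q² and u_3 = 2 q q_{xx}. If ∂_{t_5} q = q_{xxxxx} + 5 u_1 q_{xxx} + (15/2) u_{1x} q_{xx} + (5 u_3 + 10 u_1² + 5 u_{1xx}) q_x + ((5/4) u_{1xxx} + (5/2) u_{3x} + 10 u_1 u_{1x}) q, then q satisfies the fifth-order mKdV equation ∂_{t_5} q = q_{xxxxx} + 20 q² q_{xxx} + 80 q_{xx} q_x q + 20 q_x³ + 120 q⁴ q_x. -/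
/-- Let `q` be a smooth function of `(t₅, x)` (written `q t x`)
and set `u₁ = 2q²`, `u₃ = 2 q qₓₓ` (the symmetry constraint `∂_α = −∂ₓ` of the CKP
hierarchy with `q₁ = q₂ = q`). If
`∂ₜ₅ q = qₓₓₓₓₓ + 5u₁ qₓₓₓ + (15/2)u₁ₓ qₓₓ + (5u₃ + 10u₁² + 5u₁ₓₓ) qₓ
          + ((5/4)u₁ₓₓₓ + (5/2)u₃ₓ + 10u₁u₁ₓ) q`,
then `q` satisfies the fifth-order mKdV equation
`∂ₜ₅ q = qₓₓₓₓₓ + 20q² qₓₓₓ + 80 qₓₓ qₓ q + 20 qₓ³ + 120 q⁴ qₓ`. -/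
theorem ckp_symmetry_constraint_mkdv5
    (q : ℝ → ℝ → ℝ) (hq : ContDiff ℝ (⊤ : ℕ∞) (Function.uncurry q))
    (u₁ u₃ : ℝ → ℝ → ℝ)
    (hu₁ : u₁ = fun t x => 2 * (q t x)^2)
    (hu₃ : u₃ = fun t x => 2 * q t x * deriv (deriv (q t)) x)
    (hflow : ∀ t x, deriv (fun s => q s x) t
      = deriv (deriv (deriv (deriv (deriv (q t))))) x
        + 5 * u₁ t x * deriv (deriv (deriv (q t))) x
        + (15/2) * deriv (u₁ t) x * deriv (deriv (q t)) x
        + (5 * u₃ t x + 10 * (u₁ t x)^2 + 5 * deriv (deriv (u₁ t)) x) * deriv (q t) x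
        + ((5/4) * deriv (deriv (deriv (u₁ t))) x + (5/2) * deriv (u₃ t) x
            + 10 * u₁ t x * deriv (u₁ t) x) * q t x) :
    ∀ t x, deriv (fun s => q s x) t
      = deriv (deriv (deriv (deriv (deriv (q t))))) x
        + 20 * (q t x)^2 * deriv (deriv (deriv (q t))) x
        + 80 * deriv (deriv (q t)) x * deriv (q t) x * q t x
        + 20 * (deriv (q t) x)^3
        + 120 * (q t x)^4 * deriv (q t) x := by
  intro t x
  have hqt : ContDiff ℝ (⊤ : ℕ∞) (q t) :=
    hq.comp (contDiff_const.prodMk contDiff_id)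
  have hderiv {f : ℝ → ℝ} (hf : ContDiff ℝ (⊤ : ℕ∞) f) : ContDiff ℝ (⊤ : ℕ∞) (deriv f) :=
    (contDiff_infty_iff_deriv.1 hf).2
  have hhas {f : ℝ → ℝ} (hf : ContDiff ℝ (⊤ : ℕ∞) f) (y : ℝ) : HasDerivAt f (deriv f y) y :=
    (contDiff_infty_iff_deriv.1 hf).1.differentiableAt.hasDerivAt
  have h₀ := hhas hqt
  have h₁ := hhas (hderiv hqt)
  have h₂ := hhas (hderiv (hderiv hqt))
  have hu₁x : deriv (u₁ t) = fun y => 4 * (q t y * deriv (q t) y) := by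
    funext y
    rw [hu₁]
    refine (((h₀ y).pow 2).const_mul 2).deriv.trans ?_
    push_cast
    ring
  have hu₁xx : deriv (deriv (u₁ t)) =
      fun y => 4 * (deriv (q t) y ^ 2 + q t y * deriv (deriv (q t)) y) := by
    funext y
    rw [hu₁x]
    refine (((h₀ y).mul (h₁ y)).const_mul 4).deriv.trans ?_
    ring
  have hu₁xxx : deriv (deriv (deriv (u₁ t))) x =
      12 * deriv (q t) x * deriv (deriv (q t)) x
        + 4 * q t x * deriv (deriv (deriv (q t))) x := by
    rw [hu₁xx]
    refine ((((h₁ x).pow 2).add ((h₀ x).mul (h₂ x))).const_mul 4).deriv.trans ?_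
    push_cast
    ring
  have hu₃x : deriv (u₃ t) x =
      2 * deriv (q t) x * deriv (deriv (q t)) x
        + 2 * q t x * deriv (deriv (deriv (q t))) x := by
    rw [hu₃]
    exact (((h₀ x).const_mul 2).mul (h₂ x)).deriv
  rw [hflow t x, hu₁xxx, hu₁xx, hu₁x, hu₃x, hu₁, hu₃]
  ring
end
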